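/- Let q be an integer with q ≥ 3, and let p_1, p_2, …, p_k be distinct prime numbers such that gcd(p_i, q) = 1 for all 1 ≤ i ≤ k. Then there exists a constant c₂ > 0 such that for every tuple (n_1, n_2, …, n_k) ∈ ℕ_0^k with (n_1,…,n_k) ≠ (0,…,0), the multiplicative order of q modulo p_1^{n_1} p_2^{n_2} ⋯ p_k^{n_k} is at least c₂ · p_1^{n_1} p_2^{n_2} ⋯ p_k^{n_k}. -/

import Mathlib

/-!
Put `N = p₁ ⋯ p_k` and `a = q ^ φ(N²)`, so that `a ≡ 1` modulo the square of every prime `pᵢ`. For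
such an `a`, lifting the exponent shows that a product `M` of powers of the `pᵢ` divides `a ^ d - 1`
if and only if it divides `(a - 1) * d`. The order `d` of `q` modulo `M` satisfies `M ∣ q ^ d - 1`
and hence `M ∣ a ^ d - 1`, so `M ≤ |a - 1| * d`, where `a` does not depend on the exponents.
-/

section LiftingTheExponent

variable {x y : ℤ}

/-- The square makes the statement uniform in `p`: for odd `p` it would be enough that `p` divides
`x - y`, but for `p = 2` divisibility by `4` is needed. -/
lemma emultiplicity_pow_sub_pow_of_sq_dvd {p : ℕ} (hp : p.Prime) (hxy : (p : ℤ) ^ 2 ∣ x - y)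
    (hx : ¬(p : ℤ) ∣ x) (d : ℕ) :
    emultiplicity (p : ℤ) (x ^ d - y ^ d) = emultiplicity (p : ℤ) ((x - y) * d) := by
  rw [emultiplicity_mul (Nat.prime_iff_prime_int.mp hp)]
  rcases hp.eq_two_or_odd' with rfl | hodd
  · exact Int.two_pow_sub_pow' d (by simpa using hxy) hx
  · rw [Int.emultiplicity_pow_sub_pow hp hodd ((dvd_pow_self _ two_ne_zero).trans hxy) hx,
      Int.natCast_emultiplicity]

lemma natCast_dvd_pow_sub_pow_iff {M : ℕ} (hM : IsCoprime (M : ℤ) x)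
    (hxy : ∀ p : ℕ, p.Prime → p ∣ M → (p : ℤ) ^ 2 ∣ x - y) (d : ℕ) :
    (M : ℤ) ∣ x ^ d - y ^ d ↔ (M : ℤ) ∣ (x - y) * d := by
  have primePow_dvd_iff (p j : ℕ) (hp : p.Prime) (hpM : p ^ j ∣ M) :
      (p : ℤ) ^ j ∣ x ^ d - y ^ d ↔ (p : ℤ) ^ j ∣ (x - y) * d := by
    rcases eq_or_ne j 0 with rfl | hj
    · simp
    have hpM' : p ∣ M := (dvd_pow_self p hj).trans hpM
    have hpx : ¬(p : ℤ) ∣ x := fun h ↦ (Nat.prime_iff_prime_int.mp hp).not_isUnit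
      (hM.isUnit_of_dvd' (Int.natCast_dvd_natCast.mpr hpM') h)
    rw [pow_dvd_iff_le_emultiplicity, pow_dvd_iff_le_emultiplicity,
      emultiplicity_pow_sub_pow_of_sq_dvd hp (hxy p hp hpM') hpx]
  rw [Int.natCast_dvd, Int.natCast_dvd, Nat.dvd_iff_prime_pow_dvd_dvd _ M,
    Nat.dvd_iff_prime_pow_dvd_dvd _ M]
  simp_rw [← Int.natCast_dvd, Nat.cast_pow]
  exact forall₄_congr primePow_dvd_iff

end LiftingTheExponent

lemma pow_ne_one_of_one_lt_abs {R : Type*} [Ring R] [LinearOrder R] [IsStrictOrderedRing R] {a : R}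
    (ha : 1 < |a|) {n : ℕ} (hn : n ≠ 0) : a ^ n ≠ 1 := fun h ↦
  (one_lt_pow₀ ha hn).ne' (by rw [← abs_pow, h, abs_one])

lemma prod_pow_dvd_prod_pow_sum {ι R : Type*} [CommMonoid R] (s : Finset ι) (m : ι → R)
    (n : ι → ℕ) : ∏ i ∈ s, m i ^ n i ∣ (∏ i ∈ s, m i) ^ ∑ i ∈ s, n i := by
  rw [← Finset.prod_pow]
  exact Finset.prod_dvd_prod_of_dvd _ _ fun i hi ↦
    pow_dvd_pow _ (Finset.single_le_sum (fun _ _ ↦ Nat.zero_le _) hi)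

section Order

variable {q : ℤ} {M N : ℕ}

lemma intCast_zmod_pow_eq_one_iff {n : ℕ} : (q : ZMod M) ^ n = 1 ↔ (M : ℤ) ∣ q ^ n - 1 := by
  simpa [eq_comm] using ZMod.intCast_eq_intCast_iff_dvd_sub 1 (q ^ n) M

lemma intCast_zmod_pow_totient (hMq : IsCoprime (M : ℤ) q) : (q : ZMod M) ^ M.totient = 1 := by
  obtain ⟨u, hu⟩ := (ZMod.coe_int_isUnit_iff_isCoprime q M).mpr hMq
  rw [← hu, ← Units.val_pow_eq_pow_val, ZMod.pow_totient, Units.val_one]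

lemma orderOf_intCast_zmod_pos (hM : 0 < M) (hMq : IsCoprime (M : ℤ) q) :
    0 < orderOf (q : ZMod M) :=
  orderOf_pos_iff.mpr <| isOfFinOrder_iff_pow_eq_one.mpr
    ⟨M.totient, Nat.totient_pos.mpr hM, intCast_zmod_pow_totient hMq⟩

lemma natCast_dvd_pow_totient_sq_sub_one_mul_orderOf (hNq : IsCoprime (N : ℤ) q) {k : ℕ}
    (hMN : M ∣ N ^ k) :
    (M : ℤ) ∣ (q ^ (N ^ 2).totient - 1) * orderOf (q : ZMod M) := by
  have hMq : IsCoprime (M : ℤ) q :=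
    (hNq.pow_left (m := k)).of_isCoprime_of_dvd_left (by exact_mod_cast hMN)
  have hNsq : ((N ^ 2 : ℕ) : ℤ) ∣ q ^ (N ^ 2).totient - 1 :=
    intCast_zmod_pow_eq_one_iff.mp <| intCast_zmod_pow_totient <| by
      simpa only [Nat.cast_pow] using hNq.pow_left
  have hsq (p : ℕ) (hp : p.Prime) (hpM : p ∣ M) : (p : ℤ) ^ 2 ∣ q ^ (N ^ 2).totient - 1 := by
    have hpN : p ∣ N := hp.dvd_of_dvd_pow (hpM.trans hMN)
    exact dvd_trans (by exact_mod_cast pow_dvd_pow_of_dvd hpN 2) hNsq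
  refine (natCast_dvd_pow_sub_pow_iff hMq.pow_right hsq _).mp ?_
  rw [one_pow, ← pow_mul]
  calc (M : ℤ) ∣ q ^ orderOf (q : ZMod M) - 1 :=
        intCast_zmod_pow_eq_one_iff.mp (pow_orderOf_eq_one _)
    _ ∣ q ^ ((N ^ 2).totient * orderOf (q : ZMod M)) - 1 :=
        dvd_pow_sub_one_of_dvd (dvd_mul_left _ _)

lemma exists_forall_dvd_pow_le_mul_orderOf (hq : 1 < |q|) (hNq : IsCoprime (N : ℤ) q) :
    ∃ C : ℕ, 0 < C ∧ ∀ M k : ℕ, M ∣ N ^ k → M ≤ C * orderOf (q : ZMod M) := by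
  have hN : 0 < N := by
    refine Nat.pos_of_ne_zero fun hN ↦ hq.ne' ?_
    rw [hN, Nat.cast_zero, isCoprime_zero_left] at hNq
    exact Int.isUnit_iff_abs_eq.mp hNq
  have ha : q ^ (N ^ 2).totient ≠ 1 :=
    pow_ne_one_of_one_lt_abs hq (Nat.totient_pos.mpr (pow_pos hN 2)).ne'
  have hC : 0 < (q ^ (N ^ 2).totient - 1).natAbs := Int.natAbs_pos.mpr (sub_ne_zero.mpr ha)
  refine ⟨_, hC, fun M k hMN ↦ Nat.le_of_dvd (Nat.mul_pos hC ?_) ?_⟩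
  · exact orderOf_intCast_zmod_pos (Nat.pos_of_dvd_of_pos hMN (pow_pos hN k))
      ((hNq.pow_left (m := k)).of_isCoprime_of_dvd_left (by exact_mod_cast hMN))
  · simpa only [Int.natCast_dvd, Int.natAbs_mul, Int.natAbs_natCast] using
      natCast_dvd_pow_totient_sq_sub_one_mul_orderOf hNq hMN

end Order

theorem order_lower_bound_general {ι : Type*} [Fintype ι] {q : ℤ} (hq : 1 < |q|) (m : ι → ℕ)
    (hcop : ∀ i, IsCoprime (m i : ℤ) q) :
    ∃ c : ℝ, 0 < c ∧
      ∀ n : ι → ℕ, c * ∏ i, (m i : ℝ) ^ n i ≤ orderOf (q : ZMod (∏ i, m i ^ n i)) := by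
  have hNq : IsCoprime ((∏ i, m i : ℕ) : ℤ) q := by
    rw [Nat.cast_prod]
    exact IsCoprime.prod_left fun i _ ↦ hcop i
  obtain ⟨C, hC, hle⟩ := exists_forall_dvd_pow_le_mul_orderOf hq hNq
  refine ⟨(C : ℝ)⁻¹, by positivity, fun n ↦ ?_⟩
  rw [inv_mul_le_iff₀ (by positivity)]
  exact_mod_cast hle _ _ (prod_pow_dvd_prod_pow_sum Finset.univ m n)

/-- Lower bound for the multiplicative order of `q` modulo `p₁^{n₁} ⋯ p_k^{n_k}`. -/
theorem order_lower_bound (q : ℕ) (hq : 3 ≤ q) (k : ℕ) (hk : 1 ≤ k)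
    (p : Fin k → ℕ) (hprime : ∀ i, (p i).Prime) (hinj : Function.Injective p)
    (hcop : ∀ i, Nat.Coprime (p i) q) :
    ∃ c₂ : ℝ, 0 < c₂ ∧
      ∀ n : Fin k → ℕ, n ≠ 0 →
        c₂ * ∏ i, (p i : ℝ) ^ (n i) ≤ (orderOf (q : ZMod (∏ i, p i ^ n i)) : ℝ) := by
  obtain ⟨c, hc, h⟩ := order_lower_bound_general (q := q) (by rw [Nat.abs_cast]; omega) p
    fun i ↦ Nat.isCoprime_iff_coprime.mpr (hcop i)
  exact ⟨c, hc, fun n _ ↦ by simpa using h n⟩
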